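/- arXiv:0711.4762 — 2 statements merged into one kernel-verified Lean document; each statement's English description precedes it below -/
import Mathlib

section
/- Let T be a finite rooted ternary tree (each node has 0 or 3 children) with set of internal nodes T⁰, let t ∈ [0,1], and for each v ∈ T⁰ let σ_v ∈ ℝ. Define I = ∫_{R(T,t)} ∏_{v∈T⁰} e^{iσ_v s_v} ds, where R(T,t) = {s ∈ [0,t]^{T⁰} : s_v ≤ s_w whenever v is a descendant of w}. Then |I| ≤ (Ct)^{|T⁰|/2} ∏_{v∈T⁰} ⟨σ_v⟩^{−1/2} for an absolute constant C. -/
open MeasureTheory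

/-- Finite rooted trees in which every node has either zero or three children. -/
inductive TernaryTree : Type where
  | leaf : TernaryTree
  | node : TernaryTree → TernaryTree → TernaryTree → TernaryTree

/-- The type of internal (non-terminal) nodes of a ternary tree `T`, i.e. `T⁰`. -/
def TernaryTree.Idx : TernaryTree → Type
  | .leaf => Empty
  | .node a b c => Unit ⊕ (a.Idx ⊕ b.Idx ⊕ c.Idx)

instance TernaryTree.instFintypeIdx : (T : TernaryTree) → Fintype T.Idx
  | .leaf => inferInstanceAs (Fintype Empty)
  | .node a b c =>
    letI := instFintypeIdx a
    letI := instFintypeIdx b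
    letI := instFintypeIdx c
    inferInstanceAs (Fintype (Unit ⊕ (a.Idx ⊕ b.Idx ⊕ c.Idx)))

/-- `T.desc v w` means that `v` is a (proper) descendant of `w` in `T`. -/
def TernaryTree.desc : (T : TernaryTree) → T.Idx → T.Idx → Prop
  | .leaf, v, _ => v.elim
  | .node _ _ _, .inl _, _ => False
  | .node _ _ _, .inr _, .inl _ => True
  | .node a _ _, .inr (.inl v'), .inr (.inl w') => a.desc v' w'
  | .node _ b _, .inr (.inr (.inl v')), .inr (.inr (.inl w')) => b.desc v' w'
  | .node _ _ c, .inr (.inr (.inr v')), .inr (.inr (.inr w')) => c.desc v' w'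
  | .node _ _ _, .inr _, .inr _ => False

/-- The tree-ordered simplex `R(T,t)`. -/
def TernaryTree.simplex (T : TernaryTree) (t : ℝ) : Set (T.Idx → ℝ) :=
  {s | (∀ v, s v ∈ Set.Icc 0 t) ∧ ∀ v w, T.desc v w → s v ≤ s w}


theorem TernaryTree.isCompact_simplex (T : TernaryTree) (t : ℝ) : IsCompact (T.simplex t) := by
  have h1 : IsCompact (Set.univ.pi fun _ : T.Idx => Set.Icc (0:ℝ) t) :=
    isCompact_univ_pi fun _ => isCompact_Icc
  refine h1.of_isClosed_subset ?_ ?_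
  · have : T.simplex t = (⋂ v, {s | s v ∈ Set.Icc 0 t}) ∩
        ⋂ v, ⋂ w, ⋂ (_ : T.desc v w), {s | s v ≤ s w} := by
      ext s; simp [TernaryTree.simplex]
    rw [this]
    refine IsClosed.inter (isClosed_iInter fun v => isClosed_Icc.preimage (continuous_apply v))
      (isClosed_iInter fun v => isClosed_iInter fun w => isClosed_iInter fun _ =>
        isClosed_le (continuous_apply v) (continuous_apply w))
  · intro s hs v _
    exact hs.1 v

theorem TernaryTree.mem_simplex_node (a b c : TernaryTree) (t : ℝ)
    (s : (TernaryTree.node a b c).Idx → ℝ) :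
    s ∈ (TernaryTree.node a b c).simplex t ↔
      s (Sum.inl ()) ∈ Set.Icc 0 t ∧
      (fun v => s (Sum.inr (Sum.inl v))) ∈ a.simplex (s (Sum.inl ())) ∧
      (fun v => s (Sum.inr (Sum.inr (Sum.inl v)))) ∈ b.simplex (s (Sum.inl ())) ∧
      (fun v => s (Sum.inr (Sum.inr (Sum.inr v)))) ∈ c.simplex (s (Sum.inl ())) := by
  constructor
  · rintro ⟨h1, h2⟩
    exact ⟨h1 _, ⟨fun v => ⟨(h1 _).1, h2 (Sum.inr (Sum.inl v)) (Sum.inl ()) trivial⟩,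
        fun v w h => h2 (Sum.inr (Sum.inl v)) (Sum.inr (Sum.inl w)) h⟩,
      ⟨fun v => ⟨(h1 _).1, h2 (Sum.inr (Sum.inr (Sum.inl v))) (Sum.inl ()) trivial⟩,
        fun v w h => h2 (Sum.inr (Sum.inr (Sum.inl v))) (Sum.inr (Sum.inr (Sum.inl w))) h⟩,
      ⟨fun v => ⟨(h1 _).1, h2 (Sum.inr (Sum.inr (Sum.inr v))) (Sum.inl ()) trivial⟩,
        fun v w h => h2 (Sum.inr (Sum.inr (Sum.inr v))) (Sum.inr (Sum.inr (Sum.inr w))) h⟩⟩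
  · rintro ⟨h0, ⟨ha, ha'⟩, ⟨hb, hb'⟩, ⟨hc, hc'⟩⟩
    constructor
    · rintro (⟨⟩ | v | v | v)
      · exact h0
      · exact ⟨(ha v).1, (ha v).2.trans h0.2⟩
      · exact ⟨(hb v).1, (hb v).2.trans h0.2⟩
      · exact ⟨(hc v).1, (hc v).2.trans h0.2⟩
    · rintro (⟨⟩ | v | v | v) (⟨⟩ | w | w | w) h
      · exact h.elim
      · exact h.elim
      · exact h.elim
      · exact h.elim
      · exact (ha v).2
      · exact ha' v w h
      · exact h.elim
      · exact h.elim
      · exact (hb v).2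
      · exact h.elim
      · exact hb' v w h
      · exact h.elim
      · exact (hc v).2
      · exact h.elim
      · exact h.elim
      · exact hc' v w h

theorem pi_split {A B C : Type} [Fintype A] [Fintype B] [Fintype C]
    (F : (Unit ⊕ (A ⊕ B ⊕ C) → ℝ) → ℂ)
    (hF : Integrable F (Measure.pi fun _ => (volume : Measure ℝ)))
    (φ : ℝ → ℂ) (fa : ℝ → (A → ℝ) → ℂ) (fb : ℝ → (B → ℝ) → ℂ) (fc : ℝ → (C → ℝ) → ℂ)
    (h : ∀ s, F s = φ (s (Sum.inl ())) * (fa (s (Sum.inl ())) (fun v => s (Sum.inr (Sum.inl v))) *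
      (fb (s (Sum.inl ())) (fun v => s (Sum.inr (Sum.inr (Sum.inl v)))) *
       fc (s (Sum.inl ())) (fun v => s (Sum.inr (Sum.inr (Sum.inr v))))))) :
    ∫ s, F s ∂(Measure.pi fun _ => (volume : Measure ℝ)) =
      ∫ x, φ x * ((∫ y, fa x y ∂(Measure.pi fun _ => (volume : Measure ℝ))) *
        ((∫ y, fb x y ∂(Measure.pi fun _ => (volume : Measure ℝ))) *
         (∫ y, fc x y ∂(Measure.pi fun _ => (volume : Measure ℝ))))) := by
  have m1 := measurePreserving_sumPiEquivProdPi_symm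
    (fun _ : Unit ⊕ (A ⊕ B ⊕ C) => (volume : Measure ℝ))
  have m2 := measurePreserving_sumPiEquivProdPi_symm
    (fun _ : A ⊕ B ⊕ C => (volume : Measure ℝ))
  have m3 := measurePreserving_sumPiEquivProdPi_symm
    (fun _ : B ⊕ C => (volume : Measure ℝ))
  have m0 := (measurePreserving_funUnique (volume : Measure ℝ) Unit).symm
  have mA := MeasurePreserving.id (Measure.pi fun _ : A => (volume : Measure ℝ))
  have m23 := m2.comp (mA.prod m3)
  have m := m1.comp (m0.prod m23)
  have emb : MeasurableEmbedding (((MeasurableEquiv.sumPiEquivProdPi fun _ : Unit ⊕ (A ⊕ B ⊕ C) => ℝ).symm) ∘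
      Prod.map (MeasurableEquiv.funUnique Unit ℝ).symm
        (((MeasurableEquiv.sumPiEquivProdPi fun _ : (A ⊕ B ⊕ C) => ℝ).symm) ∘ Prod.map id
          (MeasurableEquiv.sumPiEquivProdPi fun _ : (B ⊕ C) => ℝ).symm)) := by
    refine (MeasurableEquiv.measurableEmbedding _).comp ?_
    exact (MeasurableEquiv.measurableEmbedding _).prodMap ((MeasurableEquiv.measurableEmbedding _).comp
      (MeasurableEmbedding.id.prodMap (MeasurableEquiv.measurableEmbedding _)))
  have hF' := (m.integrable_comp_emb emb).2 hF
  have e := m.integral_comp emb F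
  rw [← e]
  have hh := integral_prod _ hF'
  refine hh.trans ?_
  congr 1
  ext x
  rw [← integral_prod_mul, ← integral_prod_mul, ← integral_const_mul]
  congr 1
  ext y
  simp only [Function.comp]
  rw [h]
  rfl

theorem norm_expI (σ x : ℝ) : ‖Complex.exp (Complex.I * σ * x)‖ = 1 := by
  have : Complex.I * σ * x = ((σ * x : ℝ) : ℂ) * Complex.I := by push_cast; ring
  rw [this, Complex.norm_exp_ofReal_mul_I]

theorem osc_bound (t : ℝ) (ht1 : t ≤ 1) (σ : ℝ) (H H' : ℝ → ℂ)
    (hd : ∀ x, HasDerivAt H (H' x) x) (hc : Continuous H') (M : ℝ) (hM0 : 0 ≤ M)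
    (hM : ∀ x ∈ Set.Icc 0 t, ‖H x‖ ≤ M) (hM' : ∀ x ∈ Set.Icc 0 t, t * ‖H' x‖ ≤ 3 * M)
    (s : ℝ) (hs : s ∈ Set.Icc 0 t) :
    ‖∫ x in (0:ℝ)..s, Complex.exp (Complex.I * σ * x) * H x‖ ≤ 8 / Real.sqrt (1 + σ ^ 2) * M := by
  have hpos : 0 < Real.sqrt (1 + σ ^ 2) := Real.sqrt_pos.2 (by positivity)
  rcases hs with ⟨hs0, hst⟩
  have huIoc : ∀ x ∈ Set.uIoc 0 s, x ∈ Set.Icc 0 t := by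
    intro x hx
    rw [Set.uIoc_of_le hs0] at hx
    exact ⟨hx.1.le, hx.2.trans hst⟩
  by_cases hσ : |σ| ≤ 1
  · have hsq : Real.sqrt (1 + σ ^ 2) ≤ 8 := by
      rw [Real.sqrt_le_left (by norm_num)]
      have := (sq_le_one_iff_abs_le_one σ).2 hσ
      linarith
    have h1 : ‖∫ x in (0:ℝ)..s, Complex.exp (Complex.I * σ * x) * H x‖ ≤ M * |s - 0| := by
      apply intervalIntegral.norm_integral_le_of_norm_le_const
      intro x hx
      rw [norm_mul, norm_expI, one_mul]
      exact hM x (huIoc x hx)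
    rw [sub_zero, abs_of_nonneg hs0] at h1
    have h2 : M * s ≤ 1 * M := by nlinarith
    have h3 : 1 ≤ 8 / Real.sqrt (1 + σ ^ 2) := by rwa [le_div_iff₀ hpos, one_mul]
    exact h1.trans (h2.trans (by gcongr))
  · push Not at hσ
    have hσ0 : σ ≠ 0 := by rintro rfl; simp at hσ; linarith
    have hσc : (Complex.I * σ : ℂ) ≠ 0 := by simp [hσ0]
    have hσp : 0 < |σ| := by linarith
    have hnI : ‖(Complex.I * σ : ℂ)‖ = |σ| := by simp
    set v : ℝ → ℂ := fun x => Complex.exp (Complex.I * σ * x) / (Complex.I * σ) with hv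
    have hvd : ∀ x : ℝ, HasDerivAt v (Complex.exp (Complex.I * σ * x)) x := by
      intro x
      have h0 : HasDerivAt (fun x : ℝ => (Complex.I * σ * x : ℂ)) (Complex.I * σ) x := by
        simpa using (Complex.ofRealCLM.hasDerivAt (x := x)).const_mul (Complex.I * σ : ℂ)
      have := h0.cexp.div_const (Complex.I * σ)
      rwa [mul_div_cancel_right₀ _ hσc] at this
    have hvn : ∀ x, ‖v x‖ = 1 / |σ| := by
      intro x
      rw [hv]; simp only [norm_div, norm_expI, hnI]
    have hcexp : Continuous fun x : ℝ => Complex.exp (Complex.I * σ * x) := by fun_prop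
    have ibp := intervalIntegral.integral_mul_deriv_eq_deriv_mul (a := 0) (b := s)
      (fun x _ => hd x) (fun x _ => hvd x) (hc.intervalIntegrable _ _)
      (hcexp.intervalIntegrable _ _)
    have hcomm : (∫ x in (0:ℝ)..s, Complex.exp (Complex.I * σ * x) * H x) =
        ∫ x in (0:ℝ)..s, H x * Complex.exp (Complex.I * σ * x) := by
      congr 1; ext x; ring
    rw [hcomm, ibp]
    have b1 : ‖H s * v s‖ ≤ M * (1 / |σ|) := by
      rw [norm_mul, hvn]; gcongr; exact hM s ⟨hs0, hst⟩
    have b2 : ‖H 0 * v 0‖ ≤ M * (1 / |σ|) := by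
      rw [norm_mul, hvn]; gcongr; exact hM 0 ⟨le_rfl, hs0.trans hst⟩
    have b3 : ‖∫ x in (0:ℝ)..s, H' x * v x‖ ≤ 3 * M * (1 / |σ|) := by
      rcases hs0.eq_or_lt with h | h
      · rw [← h]; simp; positivity
      · have htp : 0 < t := h.trans_le hst
        have : ‖∫ x in (0:ℝ)..s, H' x * v x‖ ≤ (3 * M / t * (1 / |σ|)) * |s - 0| := by
          apply intervalIntegral.norm_integral_le_of_norm_le_const
          intro x hx
          rw [norm_mul, hvn]
          gcongr
          rw [le_div_iff₀ htp, mul_comm]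
          exact hM' x (huIoc x hx)
        rw [sub_zero, abs_of_nonneg hs0] at this
        calc _ ≤ _ := this
          _ ≤ (3 * M / t * (1 / |σ|)) * t := by gcongr
          _ = _ := by field_simp
    have hsq : Real.sqrt (1 + σ ^ 2) ≤ 8 / 5 * |σ| := by
      rw [Real.sqrt_le_left (by positivity), mul_pow, sq_abs]
      have := (one_lt_sq_iff_one_lt_abs σ).2 hσ
      linarith
    have h5 : 5 * (1 / |σ|) ≤ 8 / Real.sqrt (1 + σ ^ 2) := by
      rw [mul_one_div, div_le_div_iff₀ hσp hpos]; linarith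
    calc _ ≤ ‖H s * v s‖ + ‖H 0 * v 0‖ + ‖∫ x in (0:ℝ)..s, H' x * v x‖ :=
          (norm_sub_le _ _).trans (by gcongr; exact norm_sub_le _ _)
      _ ≤ 5 * (1 / |σ|) * M := by linarith
      _ ≤ _ := by gcongr

/-- The iterated form of the oscillatory integral. -/
noncomputable def TernaryTree.osc : (T : TernaryTree) → (T.Idx → ℝ) → ℝ → ℂ
  | .leaf, _, _ => 1
  | .node a b c, σ, t => ∫ x in (0:ℝ)..t, Complex.exp (Complex.I * σ (Sum.inl ()) * x) *
      (a.osc (fun v => σ (Sum.inr (Sum.inl v))) x *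
       (b.osc (fun v => σ (Sum.inr (Sum.inr (Sum.inl v)))) x *
        c.osc (fun v => σ (Sum.inr (Sum.inr (Sum.inr v)))) x))

/-- The two bounds: first the one where the root is bounded trivially, then the one where
the oscillation of the root is used. -/
noncomputable def TernaryTree.bd : (T : TernaryTree) → (T.Idx → ℝ) → ℝ → ℝ × ℝ
  | .leaf, _, _ => (1, 1)
  | .node a b c, σ, t =>
      (t * ((a.bd (fun v => σ (Sum.inr (Sum.inl v))) t).2 *
       ((b.bd (fun v => σ (Sum.inr (Sum.inr (Sum.inl v)))) t).2 *
        (c.bd (fun v => σ (Sum.inr (Sum.inr (Sum.inr v)))) t).2)),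
       8 / Real.sqrt (1 + σ (Sum.inl ()) ^ 2) *
        ((a.bd (fun v => σ (Sum.inr (Sum.inl v))) t).1 *
       ((b.bd (fun v => σ (Sum.inr (Sum.inr (Sum.inl v)))) t).1 *
        (c.bd (fun v => σ (Sum.inr (Sum.inr (Sum.inr v)))) t).1)))

theorem TernaryTree.bd_nonneg (T : TernaryTree) (t : ℝ) (ht : 0 ≤ t) :
    ∀ σ : T.Idx → ℝ, 0 ≤ (T.bd σ t).1 ∧ 0 ≤ (T.bd σ t).2 := by
  induction T with
  | leaf => intro σ; simp [TernaryTree.bd]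
  | node a b c iha ihb ihc =>
    intro σ
    have ha := iha (fun v => σ (Sum.inr (Sum.inl v)))
    have hb := ihb (fun v => σ (Sum.inr (Sum.inr (Sum.inl v))))
    have hc := ihc (fun v => σ (Sum.inr (Sum.inr (Sum.inr v))))
    rw [TernaryTree.bd]
    exact ⟨mul_nonneg ht (mul_nonneg ha.2 (mul_nonneg hb.2 hc.2)),
      mul_nonneg (by positivity) (mul_nonneg ha.1 (mul_nonneg hb.1 hc.1))⟩

theorem TernaryTree.bd_mul (T : TernaryTree) (t : ℝ) :
    ∀ σ : T.Idx → ℝ, (T.bd σ t).1 * (T.bd σ t).2 =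
      ∏ v : T.Idx, (8 * t) * (Real.sqrt (1 + σ v ^ 2))⁻¹ := by
  induction T with
  | leaf => intro σ; rw [TernaryTree.bd]; exact (mul_one _)
  | node a b c iha ihb ihc =>
    intro σ
    have ha := iha (fun v => σ (Sum.inr (Sum.inl v)))
    have hb := ihb (fun v => σ (Sum.inr (Sum.inr (Sum.inl v))))
    have hc := ihc (fun v => σ (Sum.inr (Sum.inr (Sum.inr v))))
    have key : (∏ v : (TernaryTree.node a b c).Idx, (8 * t) * (Real.sqrt (1 + σ v ^ 2))⁻¹) =
        (8 * t) * (Real.sqrt (1 + σ (Sum.inl ()) ^ 2))⁻¹ *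
        ((∏ v : a.Idx, (8 * t) * (Real.sqrt (1 + σ (Sum.inr (Sum.inl v)) ^ 2))⁻¹) *
        ((∏ v : b.Idx, (8 * t) * (Real.sqrt (1 + σ (Sum.inr (Sum.inr (Sum.inl v))) ^ 2))⁻¹) *
        (∏ v : c.Idx, (8 * t) * (Real.sqrt (1 + σ (Sum.inr (Sum.inr (Sum.inr v))) ^ 2))⁻¹))) := by
      have := Fintype.prod_sum_type (fun v : Unit ⊕ (a.Idx ⊕ b.Idx ⊕ c.Idx) =>
        (8 * t) * (Real.sqrt (1 + σ v ^ 2))⁻¹)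
      refine this.trans ?_
      rw [Fintype.prod_sum_type, Fintype.prod_sum_type]
      simp
    rw [key, ← ha, ← hb, ← hc, TernaryTree.bd]
    ring

theorem TernaryTree.osc_spec (T : TernaryTree) (t : ℝ) (ht0 : 0 ≤ t) (ht1 : t ≤ 1) :
    ∀ σ : T.Idx → ℝ, ∃ g : ℝ → ℂ, Continuous g ∧ (∀ x, HasDerivAt (T.osc σ) (g x) x) ∧
      ∀ x ∈ Set.Icc 0 t, ‖T.osc σ x‖ ≤ (T.bd σ t).1 ∧ t * ‖g x‖ ≤ (T.bd σ t).1 ∧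
        ‖T.osc σ x‖ ≤ (T.bd σ t).2 := by
  induction T with
  | leaf =>
    intro σ
    refine ⟨fun _ => 0, continuous_const, fun x => ?_, ?_⟩
    · exact hasDerivAt_const x (1:ℂ)
    · intro x _
      simp [TernaryTree.bd, TernaryTree.osc]
  | node a b c iha ihb ihc =>
    intro σ
    have pa := a.bd_nonneg t ht0 (fun v => σ (Sum.inr (Sum.inl v)))
    have pb := b.bd_nonneg t ht0 (fun v => σ (Sum.inr (Sum.inr (Sum.inl v))))
    have pc := c.bd_nonneg t ht0 (fun v => σ (Sum.inr (Sum.inr (Sum.inr v))))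
    obtain ⟨ga, ca, da, ba⟩ := iha (fun v => σ (Sum.inr (Sum.inl v)))
    obtain ⟨gb, cb, db, bb⟩ := ihb (fun v => σ (Sum.inr (Sum.inr (Sum.inl v))))
    obtain ⟨gc, cc, dc, bc⟩ := ihc (fun v => σ (Sum.inr (Sum.inr (Sum.inr v))))
    have hosc : (TernaryTree.node a b c).osc σ = fun t => ∫ x in (0:ℝ)..t,
      Complex.exp (Complex.I * σ (Sum.inl ()) * x) *
      (a.osc (fun v => σ (Sum.inr (Sum.inl v))) x *
       (b.osc (fun v => σ (Sum.inr (Sum.inr (Sum.inl v)))) x *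
        c.osc (fun v => σ (Sum.inr (Sum.inr (Sum.inr v)))) x)) := by
      funext t; rw [TernaryTree.osc]
    rw [hosc, TernaryTree.bd]
    generalize a.osc (fun v => σ (Sum.inr (Sum.inl v))) = fa at *
    generalize b.osc (fun v => σ (Sum.inr (Sum.inr (Sum.inl v)))) = fb at *
    generalize c.osc (fun v => σ (Sum.inr (Sum.inr (Sum.inr v)))) = fc at *
    generalize a.bd (fun v => σ (Sum.inr (Sum.inl v))) t = A at *
    generalize b.bd (fun v => σ (Sum.inr (Sum.inr (Sum.inl v)))) t = B at *
    generalize c.bd (fun v => σ (Sum.inr (Sum.inr (Sum.inr v)))) t = C at *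
    obtain ⟨A1, A2⟩ := A
    obtain ⟨B1, B2⟩ := B
    obtain ⟨C1, C2⟩ := C
    simp only at *
    generalize σ (Sum.inl ()) = τ at *
    have ka : Continuous fa := continuous_iff_continuousAt.2 fun x => (da x).continuousAt
    have kb : Continuous fb := continuous_iff_continuousAt.2 fun x => (db x).continuousAt
    have kc : Continuous fc := continuous_iff_continuousAt.2 fun x => (dc x).continuousAt
    have hcont : Continuous fun x : ℝ => Complex.exp (Complex.I * τ * x) *
        (fa x * (fb x * fc x)) := by fun_prop
    have hn : ∀ x ∈ Set.Icc 0 t, ‖Complex.exp (Complex.I * τ * x) * (fa x * (fb x * fc x))‖ ≤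
        A2 * (B2 * C2) := by
      intro x hx
      rw [norm_mul, norm_expI, one_mul, norm_mul, norm_mul]
      have h1 := (ba x hx).2.2
      have h2 := (bb x hx).2.2
      have h3 := (bc x hx).2.2
      gcongr
      exacts [pa.2, pb.2]
    refine ⟨_, hcont, fun x => intervalIntegral.integral_hasDerivAt_right
      (hcont.intervalIntegrable _ _) (hcont.stronglyMeasurableAtFilter _ _) hcont.continuousAt, ?_⟩
    intro s hs
    refine ⟨?_, ?_, ?_⟩
    · have : ‖∫ x in (0:ℝ)..s, Complex.exp (Complex.I * τ * x) * (fa x * (fb x * fc x))‖ ≤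
          A2 * (B2 * C2) * |s - 0| := by
        apply intervalIntegral.norm_integral_le_of_norm_le_const
        intro x hx
        rw [Set.uIoc_of_le hs.1] at hx
        exact hn x ⟨hx.1.le, hx.2.trans hs.2⟩
      rw [sub_zero, abs_of_nonneg hs.1, mul_comm _ s] at this
      refine this.trans (mul_le_mul_of_nonneg_right hs.2 ?_)
      exact mul_nonneg pa.2 (mul_nonneg pb.2 pc.2)
    · exact mul_le_mul_of_nonneg_left (hn s hs) ht0
    · apply osc_bound t ht1 τ (fun x => fa x * (fb x * fc x))
        (fun x => ga x * (fb x * fc x) + fa x * (gb x * fc x + fb x * gc x))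
        (fun x => (da x).mul ((db x).mul (dc x))) (by fun_prop) _
        (mul_nonneg pa.1 (mul_nonneg pb.1 pc.1)) _ _ s hs
      · intro x hx
        rw [norm_mul, norm_mul]
        have h1 := (ba x hx).1
        have h2 := (bb x hx).1
        have h3 := (bc x hx).1
        gcongr
        exacts [pa.1, pb.1]
      · intro x hx
        obtain ⟨h1, h1', -⟩ := ba x hx
        obtain ⟨h2, h2', -⟩ := bb x hx
        obtain ⟨h3, h3', -⟩ := bc x hx
        have e1 : (t * ‖ga x‖) * (‖fb x‖ * ‖fc x‖) ≤ A1 * (B1 * C1) := by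
          gcongr
          exacts [pa.1, pb.1]
        have e2 : ‖fa x‖ * ((t * ‖gb x‖) * ‖fc x‖) ≤ A1 * (B1 * C1) := by
          gcongr
          exacts [pa.1, pb.1]
        have e3 : ‖fa x‖ * (‖fb x‖ * (t * ‖gc x‖)) ≤ A1 * (B1 * C1) := by
          gcongr
          exacts [pa.1, pb.1]
        have e4 : ‖ga x * (fb x * fc x) + fa x * (gb x * fc x + fb x * gc x)‖ ≤
            ‖ga x‖ * (‖fb x‖ * ‖fc x‖) + ‖fa x‖ * (‖gb x‖ * ‖fc x‖ + ‖fb x‖ * ‖gc x‖) := by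
          refine (norm_add_le _ _).trans ?_
          rw [norm_mul, norm_mul, norm_mul]
          gcongr
          refine (norm_add_le _ _).trans ?_
          rw [norm_mul, norm_mul]
        have e5 := mul_le_mul_of_nonneg_left e4 ht0
        refine e5.trans ?_
        linarith

theorem TernaryTree.integral_eq_osc (T : TernaryTree) :
    ∀ (t : ℝ), 0 ≤ t → ∀ σ : T.Idx → ℝ,
    (∫ s in T.simplex t, (∏ v : T.Idx, Complex.exp (Complex.I * σ v * s v))
          ∂(Measure.pi fun _ : T.Idx => (volume : Measure ℝ))) = T.osc σ t := by
  induction T with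
  | leaf =>
    intro t ht σ
    have h : TernaryTree.leaf.simplex t = Set.univ := by
      ext s
      simp only [TernaryTree.simplex, Set.mem_ofPred_eq, Set.mem_univ, iff_true]
      exact ⟨fun v => v.elim, fun v => v.elim⟩
    have : IsEmpty TernaryTree.leaf.Idx := inferInstanceAs (IsEmpty Empty)
    rw [h, TernaryTree.osc, Measure.restrict_univ, Measure.pi_of_empty]
    simp
  | node a b c iha ihb ihc =>
    intro t ht σ
    have hmeas : ∀ (T : TernaryTree) (t : ℝ), MeasurableSet (T.simplex t) := fun T t =>
      (T.isCompact_simplex t).isClosed.measurableSet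
    have hint : Integrable (((TernaryTree.node a b c).simplex t).indicator fun s =>
        ∏ v : (TernaryTree.node a b c).Idx, Complex.exp (Complex.I * σ v * s v))
        (Measure.pi fun _ : (TernaryTree.node a b c).Idx => (volume : Measure ℝ)) := by
      rw [integrable_indicator_iff (hmeas (TernaryTree.node a b c) t)]
      refine ContinuousOn.integrableOn_compact ((TernaryTree.node a b c).isCompact_simplex t) ?_
      fun_prop
    rw [← integral_indicator (hmeas (TernaryTree.node a b c) t)]
    refine (pi_split (A := a.Idx) (B := b.Idx) (C := c.Idx) _ hint
      ((Set.Icc 0 t).indicator fun x : ℝ => Complex.exp (Complex.I * σ (Sum.inl ()) * x))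
      (fun x => (a.simplex x).indicator fun s => ∏ v : a.Idx,
        Complex.exp (Complex.I * σ (Sum.inr (Sum.inl v)) * s v))
      (fun x => (b.simplex x).indicator fun s => ∏ v : b.Idx,
        Complex.exp (Complex.I * σ (Sum.inr (Sum.inr (Sum.inl v))) * s v))
      (fun x => (c.simplex x).indicator fun s => ∏ v : c.Idx,
        Complex.exp (Complex.I * σ (Sum.inr (Sum.inr (Sum.inr v))) * s v)) ?_).trans ?_
    · intro s
      classical
      have hp : (∏ v : (TernaryTree.node a b c).Idx, Complex.exp (Complex.I * σ v * s v)) =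
          Complex.exp (Complex.I * σ (Sum.inl ()) * s (Sum.inl ())) *
          ((∏ v : a.Idx, Complex.exp (Complex.I * σ (Sum.inr (Sum.inl v)) *
            s (Sum.inr (Sum.inl v)))) *
          ((∏ v : b.Idx, Complex.exp (Complex.I * σ (Sum.inr (Sum.inr (Sum.inl v))) *
            s (Sum.inr (Sum.inr (Sum.inl v))))) *
          (∏ v : c.Idx, Complex.exp (Complex.I * σ (Sum.inr (Sum.inr (Sum.inr v))) *
            s (Sum.inr (Sum.inr (Sum.inr v))))))) := by
        have := Fintype.prod_sum_type (fun v : Unit ⊕ (a.Idx ⊕ b.Idx ⊕ c.Idx) =>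
          Complex.exp (Complex.I * σ v * s v))
        refine this.trans ?_
        rw [Fintype.prod_sum_type, Fintype.prod_sum_type]
        simp
      have hm := TernaryTree.mem_simplex_node a b c t s
      by_cases h : s ∈ (TernaryTree.node a b c).simplex t
      · obtain ⟨h0, h1, h2, h3⟩ := hm.1 h
        refine (Set.indicator_of_mem h _).trans ?_
        rw [Set.indicator_of_mem h0, Set.indicator_of_mem h1,
          Set.indicator_of_mem h2, Set.indicator_of_mem h3]
        exact hp
      · refine (Set.indicator_of_notMem h _).trans ?_
        symm
        by_contra hne
        simp only [mul_eq_zero, not_or] at hne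
        obtain ⟨h0, h1, h2, h3⟩ := hne
        exact h (hm.2 ⟨Set.mem_of_indicator_ne_zero h0, Set.mem_of_indicator_ne_zero h1,
          Set.mem_of_indicator_ne_zero h2, Set.mem_of_indicator_ne_zero h3⟩)
    · rw [TernaryTree.osc, intervalIntegral.integral_of_le ht, ← integral_Icc_eq_integral_Ioc,
        ← integral_indicator measurableSet_Icc]
      congr 1
      ext x
      by_cases hx : x ∈ Set.Icc 0 t
      · rw [Set.indicator_of_mem hx, Set.indicator_of_mem hx, integral_indicator (hmeas a x),
          integral_indicator (hmeas b x), integral_indicator (hmeas c x),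
          iha x hx.1, ihb x hx.1, ihc x hx.1]
      · rw [Set.indicator_of_notMem hx, Set.indicator_of_notMem hx, zero_mul]

/-- Lemma 3.2: `|∫_{R(T,t)} ∏_{v∈T⁰} e^{iσ_v s_v} ds| ≤
(Ct)^{|T⁰|/2} ∏_{v∈T⁰} ⟨σ_v⟩^{-1/2}` for an absolute constant `C`. -/
theorem tree_oscillatory_integral_bound :
    ∃ C : ℝ, 0 < C ∧ ∀ (T : TernaryTree) (t : ℝ), t ∈ Set.Icc (0:ℝ) 1 →
      ∀ σ : T.Idx → ℝ,
      ‖∫ s in T.simplex t, (∏ v : T.Idx, Complex.exp (Complex.I * σ v * s v))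
          ∂(Measure.pi fun _ : T.Idx => (volume : Measure ℝ))‖ ≤
        (C * t) ^ ((Fintype.card T.Idx : ℝ) / 2) *
          ∏ v : T.Idx, Real.sqrt (1 + σ v ^ 2) ^ (-(1/2 : ℝ)) := by
  refine ⟨8, by norm_num, ?_⟩
  rintro T t ⟨ht0, ht1⟩ σ
  rw [T.integral_eq_osc t ht0 σ]
  obtain ⟨g, -, -, hb⟩ := T.osc_spec t ht0 ht1 σ
  obtain ⟨h1, -, h2⟩ := hb t ⟨ht0, le_rfl⟩
  have h3 : ‖T.osc σ t‖ ^ 2 ≤ ∏ v : T.Idx, (8 * t) * (Real.sqrt (1 + σ v ^ 2))⁻¹ := by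
    rw [← T.bd_mul, sq]
    exact mul_le_mul h1 h2 (norm_nonneg _) (T.bd_nonneg t ht0 σ).1
  have h4 := Real.le_sqrt_of_sq_le h3
  refine h4.trans (le_of_eq ?_)
  have h8 : (0:ℝ) ≤ 8 * t := by positivity
  rw [Finset.prod_mul_distrib, Finset.prod_const, Finset.card_univ,
    Real.sqrt_mul (by positivity), Real.sqrt_eq_rpow, Real.sqrt_eq_rpow,
    ← Real.rpow_natCast, ← Real.rpow_mul h8,
    ← Real.finsetProd_rpow _ _ (fun v _ => by positivity)]
  congr 1
  · congr 1; ring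
  · refine Finset.prod_congr rfl fun v _ => ?_
    rw [Real.rpow_neg (by positivity), Real.inv_rpow (by positivity)]
end

section
/- Let T be a finite rooted ternary tree with internal nodes T⁰ partitioned into O (nodes at odd depth) and E (nodes at even depth), let t ∈ [0,1], and σ_v ∈ ℝ for v ∈ T⁰. Then |∫_{R(T,t)} ∏_{v∈T⁰} e^{iσ_v s_v} ds| ≤ 2^{|T⁰|} t^{|E|} ∏_{v∈O} ⟨σ_v⟩^{−1}. -/
open MeasureTheory

/-- The depth (level) of a node: the length of the path to the root. -/
def TernaryTree.depth : (T : TernaryTree) → T.Idx → ℕ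
  | .leaf, v => v.elim
  | .node _ _ _, .inl _ => 0
  | .node a _ _, .inr (.inl v') => a.depth v' + 1
  | .node _ b _, .inr (.inr (.inl v')) => b.depth v' + 1
  | .node _ _ c, .inr (.inr (.inr v')) => c.depth v' + 1

namespace TreeAux
open Complex in
/-- iterated integral -/
noncomputable def Phi : (T : TernaryTree) → (T.Idx → ℝ) → ℝ → ℂ
  | .leaf, _, _ => 1
  | .node a b c, σ, r => ∫ u in (0:ℝ)..r,
      cexp (I * (σ (Sum.inl ()) : ℝ) * u) *
        (Phi a (fun v => σ (Sum.inr (Sum.inl v))) u *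
         (Phi b (fun v => σ (Sum.inr (Sum.inr (Sum.inl v)))) u *
          Phi c (fun v => σ (Sum.inr (Sum.inr (Sum.inr v)))) u))

/-- weight: `p = true` if the root counts as even -/
noncomputable def W : (T : TernaryTree) → (T.Idx → ℝ) → Bool → ℝ → ℝ
  | .leaf, _, _, _ => 1
  | .node a b c, σ, p, s =>
      (if p then s else √5 * (√(1 + (σ (Sum.inl ())) ^ 2))⁻¹) *
        (W a (fun v => σ (Sum.inr (Sum.inl v))) (!p) s *
         (W b (fun v => σ (Sum.inr (Sum.inr (Sum.inl v)))) (!p) s *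
          W c (fun v => σ (Sum.inr (Sum.inr (Sum.inr v)))) (!p) s))

theorem W_nonneg (T : TernaryTree) : ∀ (σ : T.Idx → ℝ) (p : Bool) (s : ℝ), 0 ≤ s → 0 ≤ W T σ p s := by
  induction T with
  | leaf => intros; simp [W]
  | node a b c ha hb hc =>
    intro σ p s hs
    simp only [W]
    refine mul_nonneg ?_ (mul_nonneg (ha _ _ _ hs) (mul_nonneg (hb _ _ _ hs) (hc _ _ _ hs)))
    split_ifs <;> positivity

theorem W_mono (T : TernaryTree) : ∀ (σ : T.Idx → ℝ) (p : Bool) (r s : ℝ), 0 ≤ r → r ≤ s →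
    W T σ p r ≤ W T σ p s := by
  induction T with
  | leaf => intros; simp [W]
  | node a b c ha hb hc =>
    intro σ p r s hr hs
    have h0 := hr.trans hs
    simp only [W]
    have h1 := W_nonneg a
    have h2 := W_nonneg b
    have h3 := W_nonneg c
    refine mul_le_mul ?_ (mul_le_mul (ha _ _ _ _ hr hs) (mul_le_mul (hb _ _ _ _ hr hs) (hc _ _ _ _ hr hs) (h3 _ _ _ hr) (h2 _ _ _ h0)) (mul_nonneg (h2 _ _ _ hr) (h3 _ _ _ hr)) (h1 _ _ _ h0)) (mul_nonneg (h1 _ _ _ hr) (mul_nonneg (h2 _ _ _ hr) (h3 _ _ _ hr))) ?_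
    · split_ifs
      · exact hs
      · exact le_rfl
    · split_ifs <;> positivity

theorem Phi_cont (T : TernaryTree) : ∀ (σ : T.Idx → ℝ), Continuous (Phi T σ) := by
  induction T with
  | leaf => intro σ; exact (continuous_const : Continuous fun _ : ℝ => (1:ℂ))
  | node a b c ha hb hc =>
    intro σ
    have h1 := ha (fun v => σ (Sum.inr (Sum.inl v)))
    have h2 := hb (fun v => σ (Sum.inr (Sum.inr (Sum.inl v))))
    have h3 := hc (fun v => σ (Sum.inr (Sum.inr (Sum.inr v))))
    have : Continuous (fun u : ℝ => Complex.exp (Complex.I * (σ (Sum.inl ()) : ℝ) * u) *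
        (Phi a (fun v => σ (Sum.inr (Sum.inl v))) u *
         (Phi b (fun v => σ (Sum.inr (Sum.inr (Sum.inl v)))) u *
          Phi c (fun v => σ (Sum.inr (Sum.inr (Sum.inr v)))) u))) := by fun_prop
    exact intervalIntegral.continuous_primitive (fun x y => this.intervalIntegrable x y) 0

/-- dual variation bound -/
def Q (s : ℝ) (f : ℝ → ℂ) (M : ℝ) : Prop :=
  ∀ (φ : ℝ → ℂ) (K : ℝ), Continuous φ → (∀ x ∈ Set.Icc 0 s, ‖∫ r in x..s, φ r‖ ≤ K) →
    ∀ x ∈ Set.Icc 0 s, ‖∫ r in x..s, φ r * f r‖ ≤ K * M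

theorem Q_prim {s : ℝ} {g : ℝ → ℂ} {M : ℝ} (hg : Continuous g)
    (hM : ∀ r ∈ Set.Icc 0 s, ‖g r‖ ≤ M) : Q s (fun r => ∫ u in (0:ℝ)..r, g u) (s * M) := by
  intro φ K hφ hK x hx
  have hK0 : 0 ≤ K := (norm_nonneg _).trans (hK x hx)
  have hd1 : ∀ r : ℝ, HasDerivAt (fun r => -∫ u in r..s, φ u) (φ r) r := by
    intro r
    have := intervalIntegral.integral_hasDerivAt_left (hφ.intervalIntegrable r s)
      hφ.aestronglyMeasurable.stronglyMeasurableAtFilter hφ.continuousAt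
    have h2 := this.neg
    rw [neg_neg] at h2
    exact h2
  have hd2 : ∀ r : ℝ, HasDerivAt (fun r => ∫ u in (0:ℝ)..r, g u) (g r) r := fun r =>
    intervalIntegral.integral_hasDerivAt_right (hg.intervalIntegrable 0 r)
      hg.aestronglyMeasurable.stronglyMeasurableAtFilter hg.continuousAt
  have key := intervalIntegral.integral_deriv_mul_eq_sub (a := x) (b := s)
    (fun r _ => hd1 r) (fun r _ => hd2 r) (hφ.intervalIntegrable _ _) (hg.intervalIntegrable _ _)
  have c1 : Continuous (fun r => -∫ u in r..s, φ u) :=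
    continuous_iff_continuousAt.2 fun r => (hd1 r).continuousAt
  have c2 : Continuous (fun r => ∫ u in (0:ℝ)..r, g u) :=
    continuous_iff_continuousAt.2 fun r => (hd2 r).continuousAt
  have hadd := intervalIntegral.integral_add (μ := volume) (a := x) (b := s)
    ((hφ.mul c2).intervalIntegrable _ _) ((c1.mul hg).intervalIntegrable _ _)
  have e := eq_sub_of_add_eq (hadd.symm.trans key)
  simp only [Pi.mul_apply] at e
  rw [e]
  have b1 : ‖∫ u in (0:ℝ)..x, g u‖ ≤ M * |x - 0| := by
    apply intervalIntegral.norm_integral_le_of_norm_le_const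
    intro u hu
    rw [Set.uIoc_of_le hx.1] at hu
    exact hM u ⟨hu.1.le, hu.2.trans hx.2⟩
  have b2 : ‖∫ r in x..s, (-∫ u in r..s, φ u) * g r‖ ≤ (K * M) * |s - x| := by
    apply intervalIntegral.norm_integral_le_of_norm_le_const
    intro u hu
    rw [Set.uIoc_of_le hx.2] at hu
    have hu' : u ∈ Set.Icc 0 s := ⟨hx.1.trans hu.1.le, hu.2⟩
    rw [norm_mul, norm_neg]
    exact mul_le_mul (hK u hu') (hM u hu') (norm_nonneg _) hK0
  rw [abs_of_nonneg (by linarith [hx.1])] at b1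
  rw [abs_of_nonneg (by linarith [hx.2])] at b2
  simp only [intervalIntegral.integral_same, neg_zero, zero_mul, zero_sub]
  have b3 : ‖-((-∫ u in x..s, φ u) * ∫ u in (0:ℝ)..x, g u)‖ ≤ K * (M * (x - 0)) := by
    rw [norm_neg, norm_mul, norm_neg]
    exact mul_le_mul (hK x hx) b1 (norm_nonneg _) hK0
  refine (norm_sub_le _ _).trans ((add_le_add b3 b2).trans (le_of_eq (by ring)))

theorem exp_bound (σ s x : ℝ) (hx : x ∈ Set.Icc 0 s) (hs : s ≤ 1) :
    ‖∫ r in x..s, Complex.exp (Complex.I * σ * r)‖ ≤ √5 * (√(1 + σ ^ 2))⁻¹ := by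
  have hn : ∀ r : ℝ, ‖Complex.exp (Complex.I * σ * r)‖ = 1 := by
    intro r
    have := Complex.norm_exp_ofReal_mul_I (σ * r)
    rw [← this]; congr 2; push_cast; ring
  have hp : 0 < √(1 + σ ^ 2) := by positivity
  rw [← div_eq_mul_inv]
  by_cases h : |σ| ≤ 2
  · have b : ‖∫ r in x..s, Complex.exp (Complex.I * σ * r)‖ ≤ 1 * |s - x| :=
      intervalIntegral.norm_integral_le_of_norm_le_const fun u _ => (hn u).le
    rw [abs_of_nonneg (by linarith [hx.2])] at b
    have : (1:ℝ) ≤ √5 / √(1 + σ ^ 2) := by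
      rw [one_le_div hp]
      apply Real.sqrt_le_sqrt
      nlinarith [sq_abs σ, abs_nonneg σ]
    linarith [hx.1]
  · push Not at h
    have h0 : σ ≠ 0 := by rintro rfl; norm_num at h
    have hc : Complex.I * (σ:ℂ) ≠ 0 := by simp [h0]
    rw [integral_exp_mul_complex hc, norm_div]
    have : ‖Complex.I * (σ:ℂ)‖ = |σ| := by simp
    rw [this]
    have b := norm_sub_le (Complex.exp (Complex.I * σ * s)) (Complex.exp (Complex.I * σ * x))
    rw [hn, hn] at b
    rw [div_le_div_iff₀ (by linarith) hp]
    have h2 : 2 * √(1 + σ ^ 2) ≤ √5 * |σ| := by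
      apply le_of_sq_le_sq _ (by positivity)
      rw [mul_pow, mul_pow, Real.sq_sqrt (by positivity), Real.sq_sqrt (by positivity), sq_abs]
      nlinarith [sq_abs σ, abs_nonneg σ]
    nlinarith

theorem main_bound (T : TernaryTree) : ∀ (σ : T.Idx → ℝ) (s : ℝ), s ∈ Set.Icc (0:ℝ) 1 →
    Q s (Phi T σ) (W T σ true s) ∧ ‖Phi T σ s‖ ≤ W T σ false s ∧ ‖Phi T σ s‖ ≤ W T σ true s := by
  induction T with
  | leaf =>
    intro σ s hs
    refine ⟨?_, by simp [Phi, W], by simp [Phi, W]⟩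
    intro φ K hφ hK x hx
    simpa [Phi, W] using hK x hx
  | node a b c ha hb hc =>
    intro σ s hs
    have c1 := Phi_cont a (fun v => σ (Sum.inr (Sum.inl v)))
    have c2 := Phi_cont b (fun v => σ (Sum.inr (Sum.inr (Sum.inl v))))
    have c3 := Phi_cont c (fun v => σ (Sum.inr (Sum.inr (Sum.inr v))))
    have a1 := ha (fun v => σ (Sum.inr (Sum.inl v)))
    have a2 := hb (fun v => σ (Sum.inr (Sum.inr (Sum.inl v))))
    have a3 := hc (fun v => σ (Sum.inr (Sum.inr (Sum.inr v))))
    have w1 := W_nonneg a (fun v => σ (Sum.inr (Sum.inl v)))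
    have w2 := W_nonneg b (fun v => σ (Sum.inr (Sum.inr (Sum.inl v))))
    have w3 := W_nonneg c (fun v => σ (Sum.inr (Sum.inr (Sum.inr v))))
    have m1 := W_mono a (fun v => σ (Sum.inr (Sum.inl v)))
    have m2 := W_mono b (fun v => σ (Sum.inr (Sum.inr (Sum.inl v))))
    have m3 := W_mono c (fun v => σ (Sum.inr (Sum.inr (Sum.inr v))))
    have hPhi : Phi (.node a b c) σ = fun r => ∫ u in (0:ℝ)..r,
      Complex.exp (Complex.I * (σ (Sum.inl ()) : ℝ) * u) *
        (Phi a (fun v => σ (Sum.inr (Sum.inl v))) u *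
         (Phi b (fun v => σ (Sum.inr (Sum.inr (Sum.inl v)))) u *
          Phi c (fun v => σ (Sum.inr (Sum.inr (Sum.inr v)))) u)) := rfl
    have hE := exp_bound (σ (Sum.inl ()))
    simp only [W, hPhi, Bool.not_true, Bool.not_false, if_true, Bool.false_eq_true, if_false]
    generalize (σ (Sum.inl ())) = τ at *
    generalize Phi a (fun v => σ (Sum.inr (Sum.inl v))) = f1 at *
    generalize Phi b (fun v => σ (Sum.inr (Sum.inr (Sum.inl v)))) = f2 at *
    generalize Phi c (fun v => σ (Sum.inr (Sum.inr (Sum.inr v)))) = f3 at *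
    generalize W a (fun v => σ (Sum.inr (Sum.inl v))) = W1 at *
    generalize W b (fun v => σ (Sum.inr (Sum.inr (Sum.inl v)))) = W2 at *
    generalize W c (fun v => σ (Sum.inr (Sum.inr (Sum.inr v)))) = W3 at *
    have hn : ∀ r : ℝ, ‖Complex.exp (Complex.I * τ * r)‖ = 1 := by
      intro r
      have := Complex.norm_exp_ofReal_mul_I (τ * r)
      rw [← this]; congr 2; push_cast; ring
    have hg : Continuous (fun u : ℝ => Complex.exp (Complex.I * τ * u) * (f1 u * (f2 u * f3 u))) := by
      fun_prop
    have hM : ∀ r ∈ Set.Icc 0 s, ‖Complex.exp (Complex.I * τ * r) * (f1 r * (f2 r * f3 r))‖ ≤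
        W1 false s * (W2 false s * W3 false s) := by
      intro r hr
      have hr' : r ∈ Set.Icc (0:ℝ) 1 := ⟨hr.1, hr.2.trans hs.2⟩
      rw [norm_mul, hn, one_mul, norm_mul, norm_mul]
      have k1 := (a1 r hr').2.1.trans (m1 false r s hr.1 hr.2)
      have k2 := (a2 r hr').2.1.trans (m2 false r s hr.1 hr.2)
      have k3 := (a3 r hr').2.1.trans (m3 false r s hr.1 hr.2)
      exact mul_le_mul k1 (mul_le_mul k2 k3 (norm_nonneg _) (w2 _ _ hs.1)) (by positivity)
        (w1 _ _ hs.1)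
    refine ⟨Q_prim hg hM, ?_, ?_⟩
    · have q0 := fun x hx => hE s x hx hs.2
      have d0 : Continuous (fun u : ℝ => Complex.exp (Complex.I * τ * u)) := by fun_prop
      have q1 := (a1 s hs).1 _ _ d0 q0
      have q2 := (a2 s hs).1 _ _ (d0.mul c1) q1
      have q3 := (a3 s hs).1 _ _ ((d0.mul c1).mul c2) q2 0 ⟨le_rfl, hs.1⟩
      simpa only [mul_assoc, Pi.mul_apply] using q3
    · have : ‖∫ u in (0:ℝ)..s, Complex.exp (Complex.I * τ * u) * (f1 u * (f2 u * f3 u))‖ ≤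
          W1 false s * (W2 false s * W3 false s) * |s - 0| := by
        apply intervalIntegral.norm_integral_le_of_norm_le_const
        intro u hu
        rw [Set.uIoc_of_le hs.1] at hu
        exact hM u ⟨hu.1.le, hu.2⟩
      rw [sub_zero, abs_of_nonneg hs.1] at this
      linarith
end TreeAux
namespace TreeAux

theorem split_mul {A B : Type} [Fintype A] [Fintype B] (f : (A → ℝ) → ℂ) (g : (B → ℝ) → ℂ) :
    ∫ s : A ⊕ B → ℝ, f (fun v => s (Sum.inl v)) * g (fun v => s (Sum.inr v))
      ∂(Measure.pi fun _ => (volume : Measure ℝ)) =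
    (∫ x, f x ∂(Measure.pi fun _ => (volume : Measure ℝ))) *
      ∫ y, g y ∂(Measure.pi fun _ => (volume : Measure ℝ)) := by
  rw [← integral_prod_mul]
  exact (measurePreserving_sumPiEquivProdPi (X := fun _ : A ⊕ B => ℝ)
    (fun _ => (volume : Measure ℝ))).integral_comp'
      (fun z : (A → ℝ) × (B → ℝ) => f z.1 * g z.2)

theorem split_unit {B : Type} [Fintype B] (H : ℝ → (B → ℝ) → ℂ)
    (hH : Integrable (fun s : Unit ⊕ B → ℝ => H (s (Sum.inl ())) (fun v => s (Sum.inr v)))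
      (Measure.pi fun _ => (volume : Measure ℝ))) :
    ∫ s : Unit ⊕ B → ℝ, H (s (Sum.inl ())) (fun v => s (Sum.inr v))
      ∂(Measure.pi fun _ => (volume : Measure ℝ)) =
    ∫ u : ℝ, ∫ y, H u y ∂(Measure.pi fun _ => (volume : Measure ℝ)) := by
  have mp := measurePreserving_sumPiEquivProdPi (X := fun _ : Unit ⊕ B => ℝ)
    (fun _ => (volume : Measure ℝ))
  have e1 := mp.integral_comp' (fun z : (Unit → ℝ) × (B → ℝ) => H (z.1 ()) z.2)
  have i1 : Integrable (fun z : (Unit → ℝ) × (B → ℝ) => H (z.1 ()) z.2)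
      ((Measure.pi fun _ => (volume : Measure ℝ)).prod
        (Measure.pi fun _ => (volume : Measure ℝ))) :=
    (mp.integrable_comp_emb (MeasurableEquiv.measurableEmbedding _)).1 hH
  refine e1.trans ?_
  rw [integral_prod _ i1]
  exact (measurePreserving_funUnique (volume : Measure ℝ) Unit).integral_comp'
    (fun u : ℝ => ∫ y, H u y ∂(Measure.pi fun _ => (volume : Measure ℝ)))

theorem simplex_compact (T : TernaryTree) (t : ℝ) : IsCompact (T.simplex t) := by
  have h1 : IsCompact (Set.pi Set.univ (fun _ : T.Idx => Set.Icc (0:ℝ) t)) :=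
    isCompact_univ_pi fun _ => isCompact_Icc
  refine h1.of_isClosed_subset ?_ ?_
  · have : T.simplex t = (⋂ v, {s : T.Idx → ℝ | s v ∈ Set.Icc 0 t}) ∩
        ⋂ v, ⋂ w, ⋂ _ : T.desc v w, {s : T.Idx → ℝ | s v ≤ s w} := by
      ext s; simp [TernaryTree.simplex]
    rw [this]
    refine IsClosed.inter (isClosed_iInter fun v => isClosed_Icc.preimage (continuous_apply v)) ?_
    exact isClosed_iInter fun v => isClosed_iInter fun w => isClosed_iInter fun _ =>
      isClosed_le (continuous_apply v) (continuous_apply w)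
  · intro s hs v _
    exact hs.1 v

theorem mem_node {a b c : TernaryTree} {t : ℝ} (s : (TernaryTree.node a b c).Idx → ℝ) :
    s ∈ (TernaryTree.node a b c).simplex t ↔
      s (Sum.inl ()) ∈ Set.Icc 0 t ∧
      (fun v => s (Sum.inr (Sum.inl v))) ∈ a.simplex (s (Sum.inl ())) ∧
      (fun v => s (Sum.inr (Sum.inr (Sum.inl v)))) ∈ b.simplex (s (Sum.inl ())) ∧
      (fun v => s (Sum.inr (Sum.inr (Sum.inr v)))) ∈ c.simplex (s (Sum.inl ())) := by
  constructor
  · rintro ⟨h1, h2⟩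
    refine ⟨h1 _, ⟨fun v => ⟨(h1 _).1, h2 _ _ trivial⟩, fun v w h => h2 (Sum.inr (Sum.inl v)) (Sum.inr (Sum.inl w)) h⟩,
      ⟨fun v => ⟨(h1 _).1, h2 _ _ trivial⟩, fun v w h => h2 (Sum.inr (Sum.inr (Sum.inl v))) (Sum.inr (Sum.inr (Sum.inl w))) h⟩,
      ⟨fun v => ⟨(h1 _).1, h2 _ _ trivial⟩, fun v w h => h2 (Sum.inr (Sum.inr (Sum.inr v))) (Sum.inr (Sum.inr (Sum.inr w))) h⟩⟩
  · rintro ⟨h0, ⟨a1, a2⟩, ⟨b1, b2⟩, ⟨c1, c2⟩⟩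
    refine ⟨?_, ?_⟩
    · rintro (v | v | v | v)
      · exact h0
      · exact ⟨(a1 v).1, (a1 v).2.trans h0.2⟩
      · exact ⟨(b1 v).1, (b1 v).2.trans h0.2⟩
      · exact ⟨(c1 v).1, (c1 v).2.trans h0.2⟩
    · rintro (v | v | v | v) (w | w | w | w) h
      · exact h.elim
      · exact h.elim
      · exact h.elim
      · exact h.elim
      · exact (a1 v).2
      · exact a2 v w h
      · exact h.elim
      · exact h.elim
      · exact (b1 v).2
      · exact h.elim
      · exact b2 v w h
      · exact h.elim
      · exact (c1 v).2
      · exact h.elim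
      · exact h.elim
      · exact c2 v w h

theorem prod_node {M : Type*} [CommMonoid M] {a b c : TernaryTree}
    (f : (TernaryTree.node a b c).Idx → M) :
    ∏ v, f v = f (Sum.inl ()) * ((∏ v, f (Sum.inr (Sum.inl v))) *
      ((∏ v, f (Sum.inr (Sum.inr (Sum.inl v)))) * ∏ v, f (Sum.inr (Sum.inr (Sum.inr v))))) := by
  have h : ∀ g : Unit ⊕ (a.Idx ⊕ b.Idx ⊕ c.Idx) → M, ∏ v, g v =
      g (Sum.inl ()) * ((∏ v, g (Sum.inr (Sum.inl v))) *
      ((∏ v, g (Sum.inr (Sum.inr (Sum.inl v)))) * ∏ v, g (Sum.inr (Sum.inr (Sum.inr v))))) := by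
    intro g
    rw [Fintype.prod_sum_type, Fintype.prod_sum_type, Fintype.prod_sum_type]
    simp
  exact h f

/-- the integrand -/
noncomputable def P (T : TernaryTree) (σ s : T.Idx → ℝ) : ℂ :=
  ∏ v : T.Idx, Complex.exp (Complex.I * σ v * s v)

theorem P_cont (T : TernaryTree) (σ : T.Idx → ℝ) : Continuous (P T σ) := by
  unfold P
  fun_prop

theorem integral_eq_Phi (T : TernaryTree) : ∀ (σ : T.Idx → ℝ) (t : ℝ), 0 ≤ t →
    ∫ s, (T.simplex t).indicator (P T σ) s ∂(Measure.pi fun _ : T.Idx => (volume : Measure ℝ)) =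
      Phi T σ t := by
  induction T with
  | leaf =>
    intro σ t ht
    have : IsEmpty TernaryTree.leaf.Idx := inferInstanceAs (IsEmpty Empty)
    rw [Measure.pi_of_empty, integral_dirac, Set.indicator_of_mem]
    · simp [P, Phi]
    · exact ⟨fun v => isEmptyElim v, fun v => isEmptyElim v⟩
  | node a b c ha hb hc =>
    intro σ t ht
    let H : ℝ → (a.Idx ⊕ b.Idx ⊕ c.Idx → ℝ) → ℂ := fun u y =>
      (Set.Icc 0 t).indicator (fun u : ℝ => Complex.exp (Complex.I * (σ (Sum.inl ()) : ℝ) * u)) u *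
      ((a.simplex u).indicator (P a (fun v => σ (Sum.inr (Sum.inl v)))) (fun v => y (Sum.inl v)) *
      ((b.simplex u).indicator (P b (fun v => σ (Sum.inr (Sum.inr (Sum.inl v))))) (fun v => y (Sum.inr (Sum.inl v))) *
       (c.simplex u).indicator (P c (fun v => σ (Sum.inr (Sum.inr (Sum.inr v))))) (fun v => y (Sum.inr (Sum.inr v)))))
    have key : ((TernaryTree.node a b c).simplex t).indicator (P _ σ) =
        fun s : Unit ⊕ (a.Idx ⊕ b.Idx ⊕ c.Idx) → ℝ => H (s (Sum.inl ())) (fun v => s (Sum.inr v)) := by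
      funext s
      by_cases h : s ∈ (TernaryTree.node a b c).simplex t
      · rw [Set.indicator_of_mem h]
        obtain ⟨h0, h1, h2, h3⟩ := (mem_node s).1 h
        simp only [H]
        rw [Set.indicator_of_mem h0, Set.indicator_of_mem h1, Set.indicator_of_mem h2,
          Set.indicator_of_mem h3]
        exact prod_node _
      · rw [Set.indicator_of_notMem h]
        rw [mem_node] at h
        simp only [H]
        by_contra hne
        apply h
        have hne := Ne.symm hne
        rw [mul_ne_zero_iff, mul_ne_zero_iff, mul_ne_zero_iff] at hne
        exact ⟨Set.mem_of_indicator_ne_zero hne.1, Set.mem_of_indicator_ne_zero hne.2.1,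
          Set.mem_of_indicator_ne_zero hne.2.2.1, Set.mem_of_indicator_ne_zero hne.2.2.2⟩
    have hint : Integrable (((TernaryTree.node a b c).simplex t).indicator (P _ σ))
        (Measure.pi fun _ => (volume : Measure ℝ)) := by
      rw [integrable_indicator_iff (simplex_compact _ _).measurableSet]
      exact (P_cont _ σ).continuousOn.integrableOn_compact (simplex_compact _ _)
    rw [key] at hint ⊢
    refine (split_unit H hint).trans ?_
    have inner : ∀ u : ℝ, ∫ y, H u y ∂(Measure.pi fun _ => (volume : Measure ℝ)) =
        (Set.Icc 0 t).indicator (fun u : ℝ => Complex.exp (Complex.I * (σ (Sum.inl ()) : ℝ) * u) *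
        (Phi a (fun v => σ (Sum.inr (Sum.inl v))) u *
         (Phi b (fun v => σ (Sum.inr (Sum.inr (Sum.inl v)))) u *
          Phi c (fun v => σ (Sum.inr (Sum.inr (Sum.inr v)))) u))) u := by
      intro u
      by_cases hu : u ∈ Set.Icc 0 t
      · simp only [H, Set.indicator_of_mem hu]
        rw [integral_const_mul]
        congr 1
        rw [← ha _ u hu.1, ← hb _ u hu.1, ← hc _ u hu.1, ← split_mul, ← split_mul]
      · simp [H, Set.indicator_of_notMem hu]
    simp_rw [inner]
    rw [integral_indicator measurableSet_Icc, integral_Icc_eq_integral_Ioc,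
      ← intervalIntegral.integral_of_le ht]
    rfl

/-- number of nodes with given parity -/
def cnt (T : TernaryTree) (p : ℕ) : ℕ :=
  (Finset.univ.filter fun v : T.Idx => T.depth v % 2 = p).card

theorem filter_prod_node {M : Type*} [CommMonoid M] {a b c : TernaryTree} (p q : ℕ) (hpq : p + q = 1)
    (f : (TernaryTree.node a b c).Idx → M) :
    ∏ v ∈ Finset.univ.filter (fun v => (TernaryTree.node a b c).depth v % 2 = p), f v =
     (if p = 0 then f (Sum.inl ()) else 1) * 
     ((∏ v ∈ Finset.univ.filter (fun v => a.depth v % 2 = q), f (Sum.inr (Sum.inl v))) *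
      ((∏ v ∈ Finset.univ.filter (fun v => b.depth v % 2 = q), f (Sum.inr (Sum.inr (Sum.inl v)))) *
      ∏ v ∈ Finset.univ.filter (fun v => c.depth v % 2 = q), f (Sum.inr (Sum.inr (Sum.inr v))))) := by
  simp only [Finset.prod_filter]
  rw [prod_node]
  have e : ∀ n : ℕ, ((n + 1) % 2 = p) = (n % 2 = q) := by
    intro n; apply propext; omega
  simp only [TernaryTree.depth, e]
  congr 1
  simp [eq_comm]

theorem cnt_node (a b c : TernaryTree) (p q : ℕ) (hpq : p + q = 1) :
    cnt (.node a b c) p = (if p = 0 then 1 else 0) + (cnt a q + (cnt b q + cnt c q)) := by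
  have := filter_prod_node (a := a) (b := b) (c := c) p q hpq (fun _ => Multiplicative.ofAdd 1)
  simp only [Finset.prod_const] at this
  have := congrArg Multiplicative.toAdd this
  simp only [toAdd_mul, toAdd_pow, apply_ite Multiplicative.toAdd, toAdd_ofAdd, toAdd_one, smul_eq_mul, mul_one] at this
  exact this

theorem cnt_bound (T : TernaryTree) : cnt T 1 ≤ 3 * cnt T 0 ∧ cnt T 0 ≤ 1 + 3 * cnt T 1 := by
  induction T with
  | leaf => exact ⟨Nat.zero_le _, Nat.zero_le _⟩
  | node a b c ha hb hc =>
    have h0 := cnt_node a b c 0 1 rfl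
    have h1 := cnt_node a b c 1 0 rfl
    simp at h0 h1
    omega

theorem card_eq (T : TernaryTree) : Fintype.card T.Idx = cnt T 0 + cnt T 1 := by
  have := Finset.card_filter_add_card_filter_not (s := (Finset.univ : Finset T.Idx))
    (fun v => T.depth v % 2 = 0)
  simp only [Nat.mod_two_not_eq_zero] at this
  exact this.symm

theorem W_eq (T : TernaryTree) : ∀ (σ : T.Idx → ℝ) (s : ℝ),
    (W T σ true s = s ^ cnt T 0 * (√5 ^ cnt T 1 *
      ∏ v ∈ Finset.univ.filter (fun v => T.depth v % 2 = 1), (√(1 + σ v ^ 2))⁻¹)) ∧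
    (W T σ false s = s ^ cnt T 1 * (√5 ^ cnt T 0 *
      ∏ v ∈ Finset.univ.filter (fun v => T.depth v % 2 = 0), (√(1 + σ v ^ 2))⁻¹)) := by
  induction T with
  | leaf =>
    intro σ s
    have : IsEmpty TernaryTree.leaf.Idx := inferInstanceAs (IsEmpty Empty)
    simp [W, cnt]
  | node a b c ha hb hc =>
    intro σ s
    have h0 := cnt_node a b c 0 1 rfl
    have h1 := cnt_node a b c 1 0 rfl
    rw [filter_prod_node 0 1 rfl, filter_prod_node 1 0 rfl, h0, h1]
    simp only [W, Bool.not_true, Bool.not_false, if_true, Bool.false_eq_true, if_false, ha, hb, hc,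
      one_ne_zero, pow_add, pow_one, pow_zero]
    constructor <;> ring

theorem const_bound (x y : ℕ) (h : y ≤ 3 * x) : √5 ^ y ≤ (2:ℝ) ^ (x + y) := by
  have h5 : 0 ≤ √5 := Real.sqrt_nonneg _
  have hs : √5 ^ 2 = 5 := Real.sq_sqrt (by norm_num)
  have hc : (√5 / 2) ^ 3 ≤ 2 := by nlinarith [hs]
  have h1 : 1 ≤ √5 / 2 := by nlinarith
  have : (√5 / 2) ^ y ≤ 2 ^ x := by
    calc (√5 / 2) ^ y ≤ (√5 / 2) ^ (3 * x) := pow_le_pow_right₀ h1 h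
      _ = ((√5 / 2) ^ 3) ^ x := pow_mul _ _ _
      _ ≤ 2 ^ x := pow_le_pow_left₀ (by positivity) hc x
  rw [div_pow, div_le_iff₀ (by positivity)] at this
  rwa [pow_add]

end TreeAux

/-- One-sided estimate in Lemma 3.2: with `O` (resp. `E`) the internal nodes of
odd (resp. even) depth, `|∫_{R(T,t)} ∏ e^{iσ_v s_v} ds| ≤ 2^{|T⁰|} t^{|E|}
∏_{v∈O} ⟨σ_v⟩^{-1}`. -/
theorem tree_oscillatory_integral_one_sided
    (T : TernaryTree) (t : ℝ) (ht : t ∈ Set.Icc (0:ℝ) 1) (σ : T.Idx → ℝ) :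
    ‖∫ s in T.simplex t, (∏ v : T.Idx, Complex.exp (Complex.I * σ v * s v))
        ∂(Measure.pi fun _ : T.Idx => (volume : Measure ℝ))‖ ≤
      2 ^ (Fintype.card T.Idx) *
        t ^ ((Finset.univ.filter fun v : T.Idx => T.depth v % 2 = 0).card) *
        ∏ v ∈ Finset.univ.filter fun v : T.Idx => T.depth v % 2 = 1,
          (Real.sqrt (1 + σ v ^ 2))⁻¹ := by
  have e : ∫ s in T.simplex t, (∏ v : T.Idx, Complex.exp (Complex.I * σ v * s v))
        ∂(Measure.pi fun _ : T.Idx => (volume : Measure ℝ)) = TreeAux.Phi T σ t := by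
    rw [← TreeAux.integral_eq_Phi T σ t ht.1,
      integral_indicator (TreeAux.simplex_compact T t).measurableSet]
    rfl
  rw [e]
  refine ((TreeAux.main_bound T σ t ht).2.2).trans ?_
  rw [(TreeAux.W_eq T σ t).1, TreeAux.card_eq]
  have hc := TreeAux.const_bound _ _ (TreeAux.cnt_bound T).1
  have hp : 0 ≤ ∏ v ∈ Finset.univ.filter (fun v : T.Idx => T.depth v % 2 = 1),
      (Real.sqrt (1 + σ v ^ 2))⁻¹ := Finset.prod_nonneg fun v _ => by positivity
  have ht0 : 0 ≤ t ^ TreeAux.cnt T 0 := pow_nonneg ht.1 _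
  change _ ≤ 2 ^ (TreeAux.cnt T 0 + TreeAux.cnt T 1) * t ^ TreeAux.cnt T 0 * _
  calc _ = √5 ^ TreeAux.cnt T 1 * t ^ TreeAux.cnt T 0 * _ := by rw [← mul_assoc, mul_comm (t ^ _)]
    _ ≤ _ := mul_le_mul_of_nonneg_right (mul_le_mul_of_nonneg_right hc ht0) hp
end
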